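/- Let V be a smooth representation of G on a complex vector space, let Lambda : T -> C^* be a group homomorphism with Lambda(diag(u,1)) = 1 for all u in Z_p^*, and let phi : V -> C be a nonzero linear form such that phi(t·v) = Lambda(t) * phi(v) for all t in T and all v in V. Then there exists an integer s_0 >= 1 such that for every s >= s_0 there is a vector v in V with phi(v) ≠ 0 and k·v = Lambda(diag(1,d)) · v for every k in I_s with (2,2) entry d. -/

import Mathlib

open Matrix

noncomputable section

variable (p : ℕ) [Fact p.Prime]

/-- The underlying matrix of an element of `GL₂(ℚ_p)`. -/
def mat (g : GL (Fin 2) ℚ_[p]) : Matrix (Fin 2) (Fin 2) ℚ_[p] := g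

/-- Membership in `K = GL₂(ℤ_p)`: all entries are `p`-adic integers and the
determinant is a unit of `ℤ_p`. -/
def inK (g : GL (Fin 2) ℚ_[p]) : Prop :=
  (∀ i j, ‖mat p g i j‖ ≤ 1) ∧ ‖(mat p g).det‖ = 1

/-- Membership in the Iwahori subgroup `I_n` of `K`: for `n = 0`, `I_0 = K`;
for `n ≥ 1`, the diagonal entries are units of `ℤ_p` and the lower left entry
lies in `p^n ℤ_p`. -/
def inI (n : ℕ) (g : GL (Fin 2) ℚ_[p]) : Prop :=
  inK p g ∧ (n = 0 ∨
    (‖mat p g 0 0‖ = 1 ∧ ‖mat p g 1 1‖ = 1 ∧ ‖mat p g 1 0‖ ≤ (p : ℝ) ^ (-(n : ℤ))))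

/-- `p` as a unit of `ℚ_p`. -/
def pu : ℚ_[p]ˣ :=
  Units.mk0 (p : ℚ_[p]) (by exact_mod_cast (Fact.out : p.Prime).ne_zero)

/-- The element `γ = diag(p⁻¹, 1)` of `GL₂(ℚ_p)`. -/
def gamma : GL (Fin 2) ℚ_[p] :=
  Matrix.GeneralLinearGroup.mkOfDetNeZero !![(p : ℚ_[p])⁻¹, 0; 0, 1] (by
    have hp : (p : ℚ_[p]) ≠ 0 := by exact_mod_cast (Fact.out : p.Prime).ne_zero
    simp [Matrix.det_fin_two_of, hp])

/-- A character of `ℚ_p^×` is unramified if it is trivial on `ℤ_p^×`. -/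
def Unramified (μ : ℚ_[p]ˣ →* ℂˣ) : Prop :=
  ∀ u : ℚ_[p]ˣ, ‖(u : ℚ_[p])‖ = 1 → μ u = 1

/-- Membership in the diagonal torus `T` of `GL₂(ℚ_p)`. -/
def inT (g : GL (Fin 2) ℚ_[p]) : Prop := mat p g 1 0 = 0 ∧ mat p g 0 1 = 0

/-- Membership in the principal congruence subgroup `K(s)` of `K`:
matrices congruent to the identity modulo `p^s`. -/
def inKs (s : ℕ) (g : GL (Fin 2) ℚ_[p]) : Prop :=
  inK p g ∧ ∀ i j, ‖mat p g i j - (1 : Matrix (Fin 2) (Fin 2) ℚ_[p]) i j‖ ≤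
    (p : ℝ) ^ (-(s : ℤ))

/-- The diagonal element `diag(a, d)` of `GL₂(ℚ_p)`, for units `a, d`. -/
def diagGL (a d : ℚ_[p]ˣ) : GL (Fin 2) ℚ_[p] :=
  Matrix.GeneralLinearGroup.mkOfDetNeZero !![(a : ℚ_[p]), 0; 0, (d : ℚ_[p])] (by
    have : (a : ℚ_[p]) * (d : ℚ_[p]) ≠ 0 :=
      mul_ne_zero (Units.ne_zero a) (Units.ne_zero d)
    simp [Matrix.det_fin_two_of, this])

theorem aux_small {ε : ℝ} {x y : ℚ_[p]} (hx : ‖x‖ ≤ ε) (hy : ‖y‖ ≤ ε) : ‖x + y‖ ≤ ε :=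
  (Padic.nonarchimedean x y).trans (max_le hx hy)

theorem aux_unit {x : ℚ_[p]} (h : ‖x - 1‖ < 1) : ‖x‖ = 1 := by
  have h1 : ‖(1 : ℚ_[p])‖ = 1 := norm_one
  have := Padic.add_eq_max_of_ne (q := x - 1) (r := 1) (by rw [h1]; exact h.ne)
  rw [sub_add_cancel, h1, max_eq_right h.le] at this
  exact this

theorem aux_lt (r : ℕ) (hr : 1 ≤ r) : (p : ℝ) ^ (-(r : ℤ)) < 1 := by
  have hp : (1 : ℝ) < p := by exact_mod_cast (Fact.out : p.Prime).one_lt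
  exact zpow_lt_one_of_neg₀ hp (by omega)

theorem aux_inKs (r : ℕ) (hr : 1 ≤ r) (g : GL (Fin 2) ℚ_[p])
    (h00 : ‖mat p g 0 0 - 1‖ ≤ (p : ℝ) ^ (-(r : ℤ)))
    (h01 : ‖mat p g 0 1‖ ≤ (p : ℝ) ^ (-(r : ℤ)))
    (h10 : ‖mat p g 1 0‖ ≤ (p : ℝ) ^ (-(r : ℤ)))
    (h11 : ‖mat p g 1 1 - 1‖ ≤ (p : ℝ) ^ (-(r : ℤ))) : inKs p r g := by
  have hlt := aux_lt p r hr
  set ε := (p : ℝ) ^ (-(r : ℤ)) with hε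
  have hm : ∀ x y : ℚ_[p], ‖x‖ ≤ ε → ‖y‖ ≤ ε → ‖x * y‖ ≤ ε := by
    intro x y hx hy
    rw [norm_mul]
    nlinarith [norm_nonneg x, norm_nonneg y]
  refine ⟨⟨?_, ?_⟩, ?_⟩
  · intro i j
    fin_cases i <;> fin_cases j
    · exact (aux_unit p (h00.trans_lt hlt)).le
    · exact h01.trans hlt.le
    · exact h10.trans hlt.le
    · exact (aux_unit p (h11.trans_lt hlt)).le
  · apply aux_unit
    refine lt_of_le_of_lt ?_ hlt
    have e : (mat p g).det - 1 = (mat p g 0 0 - 1) * (mat p g 1 1 - 1) +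
        ((mat p g 0 0 - 1) + ((mat p g 1 1 - 1) + (- mat p g 0 1) * mat p g 1 0)) := by
      rw [Matrix.det_fin_two]; ring
    rw [e]
    exact aux_small p (hm _ _ h00 h11) (aux_small p h00 (aux_small p h11
      (hm _ _ (by rwa [norm_neg]) h10)))
  · intro i j
    rw [← hε]
    fin_cases i <;> fin_cases j <;> simp <;> assumption

theorem mat_diagGL (a d : ℚ_[p]ˣ) : mat p (diagGL p a d) = !![(a : ℚ_[p]), 0; 0, (d : ℚ_[p])] := rfl

theorem mat_mul (g h : GL (Fin 2) ℚ_[p]) : mat p (g * h) = mat p g * mat p h := rfl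

theorem mat_inj {g h : GL (Fin 2) ℚ_[p]} (e : mat p g = mat p h) : g = h := Units.ext e

theorem diagGL_mul (a d a' d' : ℚ_[p]ˣ) :
    diagGL p (a * a') (d * d') = diagGL p a d * diagGL p a' d' := by
  apply mat_inj
  rw [mat_mul, mat_diagGL, mat_diagGL, mat_diagGL]
  ext i j
  fin_cases i <;> fin_cases j <;> simp [Matrix.mul_apply, Fin.sum_univ_two]

theorem diagGL_one : diagGL p 1 1 = 1 := by
  apply mat_inj
  rw [mat_diagGL]
  ext i j
  fin_cases i <;> fin_cases j <;> simp [mat]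

theorem inT_diagGL (a d : ℚ_[p]ˣ) : inT p (diagGL p a d) := by
  constructor <;> simp [mat_diagGL]

theorem conj_entries (a d : ℚ_[p]ˣ) (k : GL (Fin 2) ℚ_[p]) :
    mat p (diagGL p a⁻¹ d⁻¹ * k * diagGL p a d) =
      !![mat p k 0 0, (a : ℚ_[p])⁻¹ * mat p k 0 1 * d; (d : ℚ_[p])⁻¹ * mat p k 1 0 * a, mat p k 1 1] := by
  rw [mat_mul, mat_mul, mat_diagGL, mat_diagGL]
  have ha := a.ne_zero
  have hd := d.ne_zero
  ext i j
  fin_cases i <;> fin_cases j <;> simp [Matrix.mul_apply, Matrix.vecMul, dotProduct, Fin.sum_univ_two] <;> field_simp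

theorem conj_fix {V : Type*} [AddCommGroup V] [Module ℂ V]
    (ρ : GL (Fin 2) ℚ_[p] →* (V →ₗ[ℂ] V)) (a d : ℚ_[p]ˣ) (k : GL (Fin 2) ℚ_[p]) (v : V)
    (h : ρ (diagGL p a⁻¹ d⁻¹ * k * diagGL p a d) v = v) :
    ρ k (ρ (diagGL p a d) v) = ρ (diagGL p a d) v := by
  have e : k * diagGL p a d = diagGL p a d * (diagGL p a⁻¹ d⁻¹ * k * diagGL p a d) := by
    rw [← mul_assoc, ← mul_assoc, ← diagGL_mul, mul_inv_cancel, mul_inv_cancel, diagGL_one, one_mul]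
  calc ρ k (ρ (diagGL p a d) v) = ρ (k * diagGL p a d) v := by rw [map_mul]; rfl
    _ = ρ (diagGL p a d) (ρ (diagGL p a⁻¹ d⁻¹ * k * diagGL p a d) v) := by rw [e, map_mul]; rfl
    _ = _ := by rw [h]

theorem average {V A : Type*} [AddCommGroup V] [Module ℂ V] [Group A]
    (U : Subgroup A) [U.FiniteIndex] (σ : A →* Module.End ℂ V) (v : V)
    (hU : ∀ u ∈ U, σ u v = v) (φ : V →ₗ[ℂ] ℂ) (hφ : ∀ a w, φ (σ a w) = φ w) (hv : φ v ≠ 0) :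
    ∃ w : V, φ w ≠ 0 ∧ (∀ a, σ a w = w) ∧
      ∀ L : V →ₗ[ℂ] V, (∀ a, L (σ a v) = σ a v) → L w = w := by
  have _ : Finite (A ⧸ U) := inferInstance
  let : Fintype (A ⧸ U) := Fintype.ofFinite _
  have key : ∀ a b : A, (a : A ⧸ U) = b → σ a v = σ b v := by
    intro a b hab
    have h := hU _ (QuotientGroup.eq.1 hab)
    calc σ a v = σ a (σ (a⁻¹ * b) v) := by rw [h]
      _ = (σ a * σ (a⁻¹ * b)) v := rfl
      _ = σ b v := by rw [← map_mul, mul_inv_cancel_left]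
  refine ⟨∑ q : A ⧸ U, σ q.out v, ?_, ?_, ?_⟩
  · rw [map_sum]
    simp only [hφ]
    rw [Finset.sum_const, nsmul_eq_mul]
    refine mul_ne_zero ?_ hv
    rw [Nat.cast_ne_zero]
    exact Finset.card_ne_zero.2 ⟨((1 : A) : A ⧸ U), Finset.mem_univ _⟩
  · intro a
    rw [map_sum]
    refine Fintype.sum_equiv (MulAction.toPerm a) _ _ ?_
    intro q
    have : σ a (σ q.out v) = σ (a * q.out) v := by rw [map_mul]; rfl
    rw [this]
    apply key
    rw [MulAction.toPerm_apply, QuotientGroup.out_eq']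
    conv_rhs => rw [← QuotientGroup.out_eq' q]
    rfl
  · intro L hL
    rw [map_sum]
    exact Finset.sum_congr rfl fun q _ => hL _

/-- Integral units mapped to field units. -/
def cU : ℤ_[p]ˣ →* ℚ_[p]ˣ := Units.map (PadicInt.Coe.ringHom (p := p)).toMonoidHom

theorem cU_norm (a : ℤ_[p]ˣ) : ‖(cU p a : ℚ_[p])‖ = 1 := by
  have := PadicInt.norm_units a
  exact this

theorem cU_surj (x : ℚ_[p]ˣ) (h : ‖(x : ℚ_[p])‖ = 1) : ∃ a, cU p a = x :=
  ⟨PadicInt.mkUnits h, Units.ext rfl⟩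

/-- Reduction of units. -/
def red (r : ℕ) : ℤ_[p]ˣ →* (ZMod (p ^ r))ˣ :=
  Units.map (PadicInt.toZModPow (p := p) r).toMonoidHom

theorem red_ker (r : ℕ) (a : ℤ_[p]ˣ) (h : red p r a = 1) :
    ‖(cU p a : ℚ_[p]) - 1‖ ≤ (p : ℝ) ^ (-(r : ℤ)) := by
  have h1 : PadicInt.toZModPow (p := p) r (a : ℤ_[p]) = 1 := congrArg Units.val h
  have h2 : ((a : ℤ_[p]) - 1) ∈ RingHom.ker (PadicInt.toZModPow (p := p) r) := by
    rw [RingHom.mem_ker, map_sub, h1, map_one, sub_self]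
  rw [PadicInt.ker_toZModPow, ← PadicInt.norm_le_pow_iff_mem_span_pow] at h2
  exact h2

/-- Lemma «lemmeV3» (in the form used in its proof): if `V` is a smooth
representation of `G`, `Λ` is a character of the diagonal torus `T` which is
trivial on `diag(ℤ_p^×, 1)`, and `φ` is a nonzero linear form on `V` that is
`(T, Λ)`-equivariant, then there is `s₀ ≥ 1` such that for every `s ≥ s₀`
the form `φ` does not vanish on the subspace `V^{I_s, Λ(diag(1,·))}`. -/
theorem stmt15 {V : Type*} [AddCommGroup V] [Module ℂ V]
    (ρ : GL (Fin 2) ℚ_[p] →* (V →ₗ[ℂ] V))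
    (hsmooth : ∀ v : V, ∃ s : ℕ, 1 ≤ s ∧
      ∀ k : GL (Fin 2) ℚ_[p], inKs p s k → ρ k v = v)
    (Λ : GL (Fin 2) ℚ_[p] → ℂˣ)
    (hΛmul : ∀ t t' : GL (Fin 2) ℚ_[p], inT p t → inT p t' →
      Λ (t * t') = Λ t * Λ t')
    (hΛunr : ∀ u : ℚ_[p]ˣ, ‖(u : ℚ_[p])‖ = 1 → Λ (diagGL p u 1) = 1)
    (φ : V →ₗ[ℂ] ℂ) (hφ : φ ≠ 0)
    (hequiv : ∀ (t : GL (Fin 2) ℚ_[p]) (v : V), inT p t →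
      φ (ρ t v) = (Λ t : ℂ) * φ v) :
    ∃ s₀ : ℕ, 1 ≤ s₀ ∧ ∀ s : ℕ, s₀ ≤ s → ∃ v : V,
      φ v ≠ 0 ∧ ∀ (k : GL (Fin 2) ℚ_[p]) (d : ℚ_[p]ˣ),
        inI p s k → mat p k 1 1 = d →
        ρ k v = (Λ (diagGL p 1 d) : ℂ) • v := by
  classical
  obtain ⟨v0, hv0⟩ : ∃ v, φ v ≠ 0 := by
    by_contra! h
    exact hφ (LinearMap.ext h)
  obtain ⟨r, hr, hfix⟩ := hsmooth v0
  have hpp : (0 : ℝ) < p := by exact_mod_cast (Fact.out : p.Prime).pos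
  have hlt := aux_lt p r hr
  set P : ℚ_[p]ˣ := (pu p ^ r)⁻¹ with hP
  have hPn : ‖(P : ℚ_[p])‖ = (p : ℝ) ^ (r : ℤ) := by
    rw [hP, Units.val_inv_eq_inv_val, norm_inv, Units.val_pow_eq_pow_val, norm_pow]
    change (‖(p : ℚ_[p])‖ ^ r)⁻¹ = _
    rw [Padic.norm_p, inv_pow, inv_inv, zpow_natCast]
  set v1 := ρ (diagGL p P 1) v0 with hv1def
  have hv1 : φ v1 ≠ 0 := by
    rw [hv1def, hequiv _ _ (inT_diagGL p _ _)]
    exact mul_ne_zero (Units.ne_zero _) hv0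
  have hfix1 : ∀ k : GL (Fin 2) ℚ_[p], ‖mat p k 0 0 - 1‖ ≤ (p : ℝ) ^ (-(r : ℤ)) →
      ‖mat p k 1 1 - 1‖ ≤ (p : ℝ) ^ (-(r : ℤ)) → ‖mat p k 0 1‖ ≤ 1 →
      ‖mat p k 1 0‖ ≤ (p : ℝ) ^ (-((2 * r : ℕ) : ℤ)) → ρ k v1 = v1 := by
    intro k h00 h11 h01 h10
    apply conj_fix
    apply hfix
    apply aux_inKs p r hr <;> rw [conj_entries]
    · simpa using h00
    · simp only [Matrix.of_apply, Matrix.cons_val', Matrix.cons_val_zero, Matrix.cons_val_one,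
        Matrix.cons_val_fin_one, Units.val_one, mul_one, norm_mul, norm_inv, hPn]
      rw [← _root_.zpow_neg]
      exact mul_le_of_le_one_right (zpow_pos hpp _).le h01
    · simp only [Matrix.of_apply, Matrix.cons_val', Matrix.cons_val_zero, Matrix.cons_val_one,
        Matrix.cons_val_fin_one, Units.val_one, inv_one, one_mul, norm_mul, hPn]
      calc _ ≤ (p : ℝ) ^ (-((2 * r : ℕ) : ℤ)) * (p : ℝ) ^ (r : ℤ) :=
            mul_le_mul_of_nonneg_right h10 (zpow_pos hpp _).le
        _ = _ := by rw [← zpow_add₀ hpp.ne']; congr 1; push_cast; ring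
    · simpa using h11
  let D : ℤ_[p]ˣ × ℤ_[p]ˣ →* GL (Fin 2) ℚ_[p] :=
    MonoidHom.mk' (fun a => diagGL p (cU p a.1) (cU p a.2)) (by
      intro a b
      simp only [Prod.fst_mul, Prod.snd_mul, map_mul]
      exact diagGL_mul p _ _ _ _)
  have hDT : ∀ a, inT p (D a) := fun a => inT_diagGL p _ _
  let χ : ℤ_[p]ˣ × ℤ_[p]ˣ →* ℂˣ := MonoidHom.mk' (fun a => Λ (D a)) (by
    intro a b
    rw [map_mul]
    exact hΛmul _ _ (hDT a) (hDT b))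
  let σ : ℤ_[p]ˣ × ℤ_[p]ˣ →* Module.End ℂ V :=
    { toFun := fun a => (((χ a)⁻¹ : ℂˣ) : ℂ) • ρ (D a)
      map_one' := by
        rw [map_one, map_one, map_one, inv_one, Units.val_one, one_smul]
      map_mul' := by
        intro a b
        ext w
        rw [map_mul, map_mul, map_mul, mul_inv, Units.val_mul]
        change _ = (((χ a)⁻¹ : ℂˣ) : ℂ) • ρ (D a) ((((χ b)⁻¹ : ℂˣ) : ℂ) • ρ (D b) w)
        rw [map_smul, smul_smul]
        rfl }
  have hσ : ∀ a w, σ a w = (((χ a)⁻¹ : ℂˣ) : ℂ) • ρ (D a) w := fun a w => rfl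
  let R := (red p r).prodMap (red p r)
  have : NeZero (p ^ r) := ⟨pow_ne_zero _ (Fact.out : p.Prime).ne_zero⟩
  have : Finite R.range := inferInstance
  have hU : ∀ u ∈ R.ker, σ u v1 = v1 := by
    intro u hu
    have hu' : R u = 1 := hu
    have h1 := red_ker p r u.1 (congrArg Prod.fst hu')
    have h2 := red_ker p r u.2 (congrArg Prod.snd hu')
    have h3 : ρ (D u) v1 = v1 := by
      apply hfix1
      · exact h1
      · exact h2
      · change ‖(0 : ℚ_[p])‖ ≤ 1
        simp
      · change ‖(0 : ℚ_[p])‖ ≤ _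
        rw [norm_zero]; exact (zpow_pos hpp _).le
    have h4 := hequiv (D u) v1 (hDT u)
    rw [h3] at h4
    have h5 : (χ u : ℂ) = 1 := (mul_eq_right₀ hv1).1 h4.symm
    have h6 : χ u = 1 := Units.ext h5
    rw [hσ, h3, h6, inv_one, Units.val_one, one_smul]
  have hφσ : ∀ a w, φ (σ a w) = φ w := by
    intro a w
    rw [hσ, map_smul, hequiv _ _ (hDT a), smul_eq_mul]
    exact Units.inv_mul_cancel_left (χ a) (φ w)
  obtain ⟨w, hw, hwσ, hwL⟩ := average R.ker σ v1 hU φ hφσ hv1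
  refine ⟨2 * r, by omega, fun s hs => ⟨w, hw, ?_⟩⟩
  rintro k d ⟨⟨hK, -⟩, hk⟩ hd
  obtain ⟨ha, hdn, hc⟩ := hk.resolve_left (by omega)
  have ha0 : mat p k 0 0 ≠ 0 := by
    intro h; rw [h, norm_zero] at ha; exact zero_ne_one ha
  obtain ⟨a', ha'⟩ := cU_surj p (Units.mk0 _ ha0) ha
  rw [hd] at hdn
  obtain ⟨d', hd'⟩ := cU_surj p d hdn
  have hs' : (p : ℝ) ^ (-(s : ℤ)) ≤ (p : ℝ) ^ (-((2 * r : ℕ) : ℤ)) := by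
    apply zpow_le_zpow_right₀
    · exact_mod_cast (Fact.out : p.Prime).one_lt.le
    · omega
  set t := D (a', d') with ht
  have htd : t = diagGL p (Units.mk0 _ ha0) d := by
    rw [← ha', ← hd']; rfl
  -- the remaining factor
  set k' := diagGL p (Units.mk0 _ ha0)⁻¹ d⁻¹ * k with hk'
  have hkk : k = t * k' := by
    rw [htd, hk', ← mul_assoc, ← diagGL_mul, mul_inv_cancel, mul_inv_cancel, diagGL_one, one_mul]
  have hm : mat p k' = !![1, (mat p k 0 0)⁻¹ * mat p k 0 1; (d : ℚ_[p])⁻¹ * mat p k 1 0, 1] := by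
    rw [hk', mat_mul, mat_diagGL]
    have hd0 := d.ne_zero
    ext i j
    fin_cases i <;> fin_cases j <;> simp [Matrix.mul_apply, Fin.sum_univ_two, ha0, hd]
  have hk'w : ρ k' w = w := by
    apply hwL
    intro a
    rw [hσ, map_smul]
    congr 1
    change ρ k' (ρ (diagGL p (cU p a.1) (cU p a.2)) v1) = ρ (diagGL p (cU p a.1) (cU p a.2)) v1
    apply conj_fix
    apply hfix1 <;> rw [conj_entries, hm]
    · simp [(zpow_pos hpp _).le]
    · simp [(zpow_pos hpp _).le]
    · simpa [cU_norm, ha] using hK 0 1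
    · simpa [cU_norm, hdn] using hc.trans hs'
  have htw : ρ t w = (χ (a', d') : ℂ) • w := by
    have := hwσ (a', d')
    rw [hσ] at this
    rw [← this, smul_smul, Units.mul_inv, one_smul, this]
  have hχ : χ (a', d') = Λ (diagGL p 1 d) := by
    change Λ t = _
    have e := diagGL_mul p (Units.mk0 _ ha0) 1 1 d
    rw [mul_one, one_mul] at e
    rw [htd, e, hΛmul _ _ (inT_diagGL p _ _) (inT_diagGL p _ _), hΛunr _ ha, one_mul]
  rw [← hχ, ← htw]
  conv_lhs => rw [hkk, map_mul]
  change ρ t (ρ k' w) = _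
  rw [hk'w]
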